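/- If x ∈ ℝ^m has the distinct subset-sum property, then the random walk W_x(t) = Σ_{i=1}^t ε_i x_{σ(i)} (with σ a uniformly random permutation of [m] and ε uniform in {±1}^m) satisfies P[∀ t ∈ [m] : W_x(t) > 0] = (1/4^m)·C(2m, m). -/

import Mathlib

open Finset

/-- The number of orderings of `S` (of length `k = #S`) all of whose partial sums of `y` are
positive. -/
noncomputable def positiveOrderings {α : Type*} [Fintype α] [DecidableEq α] (y : α → ℝ) (k : ℕ)
    (S : Finset α) : ℕ :=
  #{f : Fin k → α | univ.image f = S ∧ ∀ t, 0 < ∑ i with i ≤ t, y (f i)}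

/-- The values `x`, with signs flipped on `U`. -/
def flipOn {α : Type*} [DecidableEq α] (x : α → ℝ) (U : Finset α) (i : α) : ℝ :=
  if i ∈ U then -x i else x i

/-- The number of signed orderings of `S` all of whose partial sums are positive. -/
noncomputable def positiveSignedOrderings {α : Type*} [Fintype α] [DecidableEq α] (x : α → ℝ)
    (S : Finset α) : ℕ :=
  ∑ U ∈ S.powerset, positiveOrderings (flipOn x U) #S S

theorem sum_antidiagonal_fst_mul_centralBinom (n : ℕ) :
    2 * ∑ p ∈ antidiagonal n, p.1 * (p.1.centralBinom * p.2.centralBinom) =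
      n * ∑ p ∈ antidiagonal n, p.1.centralBinom * p.2.centralBinom := by
  have h : ∑ p ∈ antidiagonal n, p.1 * (p.1.centralBinom * p.2.centralBinom) =
      ∑ p ∈ antidiagonal n, p.2 * (p.1.centralBinom * p.2.centralBinom) := by
    rw [← Finset.Nat.sum_antidiagonal_swap]
    exact sum_congr rfl fun p _ => by simp [mul_comm]
  rw [two_mul]
  nth_rewrite 2 [h]
  rw [← sum_add_distrib, mul_sum]
  refine sum_congr rfl fun p hp => ?_
  rw [← mem_antidiagonal.1 hp, add_mul]

theorem sum_antidiagonal_centralBinom_mul (n : ℕ) :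
    ∑ p ∈ antidiagonal n, p.1.centralBinom * p.2.centralBinom = 4 ^ n := by
  induction n with
  | zero => simp
  | succ n ih =>
    have h₁ := sum_antidiagonal_fst_mul_centralBinom (n + 1)
    have h₀ := sum_antidiagonal_fst_mul_centralBinom n
    have h : ∑ p ∈ antidiagonal (n + 1), p.1 * (p.1.centralBinom * p.2.centralBinom) =
        4 * ∑ p ∈ antidiagonal n, p.1 * (p.1.centralBinom * p.2.centralBinom) +
          2 * ∑ p ∈ antidiagonal n, p.1.centralBinom * p.2.centralBinom := by
      rw [Nat.sum_antidiagonal_succ, mul_sum, mul_sum, ← sum_add_distrib]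
      simp only [zero_mul, zero_add]
      refine sum_congr rfl fun p _ => ?_
      rw [← mul_assoc, Nat.succ_mul_centralBinom_succ]
      ring
    rw [ih] at h h₀
    refine Nat.eq_of_mul_eq_mul_left n.succ_pos ?_
    rw [Nat.succ_eq_add_one, ← h₁, h, mul_add, ← mul_assoc, mul_comm 2 4, mul_assoc, h₀]
    ring

section

variable {α : Type*} [DecidableEq α]

theorem image_snoc_eq_iff {k : ℕ} {S : Finset α} (hS : #S = k + 1) (g : Fin k → α) (a : α) :
    univ.image (Fin.snoc g a : Fin (k + 1) → α) = S ↔ a ∈ S ∧ univ.image g = S.erase a := by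
  have h : univ.image (Fin.snoc g a : Fin (k + 1) → α) = insert a (univ.image g) := by
    ext b
    simp [Fin.exists_fin_succ', or_comm, eq_comm]
  rw [h]
  constructor
  · rintro rfl
    refine ⟨mem_insert_self _ _, ?_⟩
    symm
    refine eq_of_subset_of_card_le (fun b hb => ?_) ?_
    · exact (mem_insert.1 (mem_of_mem_erase hb)).resolve_left (ne_of_mem_erase hb)
    · rw [card_erase_of_mem (mem_insert_self _ _), hS]
      simpa using card_image_le (s := univ) (f := g)
  · rintro ⟨ha, hg⟩
    rw [hg, insert_erase ha]

theorem sum_powerset_factorial_mul_centralBinom (S : Finset α) :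
    ∑ A ∈ S.powerset, ((#A).factorial * (#A).centralBinom) *
      ((#(S \ A)).factorial * (#(S \ A)).centralBinom) = 4 ^ #S * (#S).factorial := by
  have h : ∀ A ∈ S.powerset, ((#A).factorial * (#A).centralBinom) *
      ((#(S \ A)).factorial * (#(S \ A)).centralBinom) =
      ((#A).factorial * (#A).centralBinom) *
        ((#S - #A).factorial * (#S - #A).centralBinom) := fun A hA => by
    rw [card_sdiff_of_subset (mem_powerset.1 hA)]
  rw [sum_congr rfl h, sum_powerset_apply_card (fun k => (k.factorial * k.centralBinom) *
    ((#S - k).factorial * (#S - k).centralBinom)), ← sum_antidiagonal_centralBinom_mul,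
    Nat.sum_antidiagonal_eq_sum_range_succ_mk, sum_mul]
  refine sum_congr rfl fun k hk => ?_
  rw [smul_eq_mul, ← Nat.choose_mul_factorial_mul_factorial (Nat.lt_succ_iff.1 (mem_range.1 hk))]
  ring

theorem sum_flipOn_ne_zero {x : α → ℝ}
    (hx : ∀ A B : Finset α, Disjoint A B → A ≠ B → ∑ i ∈ A, x i ≠ ∑ i ∈ B, x i)
    (U S : Finset α) (hS : S.Nonempty) : ∑ i ∈ S, flipOn x U i ≠ 0 := by
  have hdisj := disjoint_filter_filter_not S S (· ∈ U)
  have hne : S.filter (· ∉ U) ≠ S.filter (· ∈ U) := by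
    obtain ⟨a, ha⟩ := hS
    intro h
    have := congrArg (a ∈ ·) h
    simp [ha] at this
  simp only [flipOn, sum_ite, sum_neg_distrib]
  have := hx _ _ hdisj.symm hne
  contrapose! this
  linarith

variable [Fintype α]

theorem positiveOrderings_congr {y z : α → ℝ} {S : Finset α} (h : ∀ i ∈ S, y i = z i) (k : ℕ) :
    positiveOrderings y k S = positiveOrderings z k S := by
  unfold positiveOrderings
  congr 1
  ext f
  simp only [mem_filter, mem_univ, true_and]
  refine and_congr_right fun hf => forall_congr' fun t => ?_
  rw [sum_congr rfl fun i _ => h (f i) (hf ▸ mem_image_of_mem f (mem_univ i))]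

theorem positiveOrderings_zero_empty (y : α → ℝ) : positiveOrderings y 0 ∅ = 1 := by
  simp [positiveOrderings]

theorem positiveOrderings_succ (y : α → ℝ) {k : ℕ} {S : Finset α} (hS : #S = k + 1) :
    positiveOrderings y (k + 1) S =
      if 0 < ∑ i ∈ S, y i then ∑ a ∈ S, positiveOrderings y k (S.erase a) else 0 := by
  have hsum : ∀ f : Fin (k + 1) → α, univ.image f = S → ∑ i, y (f i) = ∑ i ∈ S, y i := by
    intro f hf
    have hinj : Set.InjOn f (univ : Finset (Fin (k + 1))) :=
      card_image_iff.1 (by rw [hf, hS, card_univ, Fintype.card_fin])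
    rw [← hf, sum_image hinj]
  have key : ∀ (g : Fin k → α) (a : α),
      (univ.image (Fin.snoc g a : Fin (k + 1) → α) = S ∧
        ∀ t, 0 < ∑ i with i ≤ t, y ((Fin.snoc g a : Fin (k + 1) → α) i)) ↔
      0 < ∑ i ∈ S, y i ∧ a ∈ S ∧ univ.image g = S.erase a ∧
        ∀ t, 0 < ∑ i with i ≤ t, y (g i) := by
    intro g a
    have hlast : univ.filter (· ≤ Fin.last k) = univ := by ext; simp [Fin.le_last]
    have hcast : ∀ t : Fin k,
        ∑ i with i ≤ t.castSucc, y ((Fin.snoc g a : Fin (k + 1) → α) i) =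
          ∑ i with i ≤ t, y (g i) := by
      intro t
      rw [sum_filter, sum_filter, Fin.sum_univ_castSucc]
      simp [Fin.not_le.2 (Fin.castSucc_lt_last t)]
    rw [Fin.forall_fin_succ', hlast]
    simp only [hcast]
    constructor
    · rintro ⟨hi, ht, hl⟩
      rw [hsum _ hi] at hl
      exact ⟨hl, ((image_snoc_eq_iff hS g a).1 hi).1, ((image_snoc_eq_iff hS g a).1 hi).2, ht⟩
    · rintro ⟨hl, ha, hi, ht⟩
      have hi' := (image_snoc_eq_iff hS g a).2 ⟨ha, hi⟩
      exact ⟨hi', ht, by rwa [hsum _ hi']⟩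
  unfold positiveOrderings
  have hsplit : #{f : Fin (k + 1) → α | univ.image f = S ∧ ∀ t, 0 < ∑ i with i ≤ t, y (f i)} =
      ∑ a, #{g : Fin k → α | 0 < ∑ i ∈ S, y i ∧ a ∈ S ∧ univ.image g = S.erase a ∧
        ∀ t, 0 < ∑ i with i ≤ t, y (g i)} := by
    rw [card_filter, ← (Fin.snocEquiv fun _ => α).sum_comp, Fintype.sum_prod_type]
    refine sum_congr rfl fun a _ => ?_
    rw [card_filter]
    exact sum_congr rfl fun g _ => if_congr (key g a) rfl rfl
  rw [hsplit]
  split_ifs with hpos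
  · rw [← sum_subset (subset_univ S) fun a _ ha => by simp [ha]]
    exact sum_congr rfl fun a ha => by simp only [hpos, ha, true_and]
  · simp [hpos]

theorem positiveOrderings_card (y : α → ℝ) {S : Finset α} (hS : S.Nonempty) :
    positiveOrderings y #S S =
      if 0 < ∑ i ∈ S, y i then ∑ a ∈ S, positiveOrderings y #(S.erase a) (S.erase a) else 0 := by
  obtain ⟨k, hk⟩ := Nat.exists_eq_succ_of_ne_zero hS.card_pos.ne'
  rw [hk, positiveOrderings_succ y hk]
  refine if_congr Iff.rfl (sum_congr rfl fun a ha => ?_) rfl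
  rw [card_erase_of_mem ha, hk, Nat.succ_sub_one]

/-- Splitting an ordering at its minimal partial sum is counted by this convolution. -/
noncomputable def splitOrderings (y : α → ℝ) (S : Finset α) : ℕ :=
  ∑ A ∈ S.powerset, positiveOrderings (-y) #A A * positiveOrderings y #(S \ A) (S \ A)

theorem splitOrderings_neg (y : α → ℝ) (S : Finset α) :
    splitOrderings (-y) S = splitOrderings y S := by
  unfold splitOrderings
  refine sum_nbij' (S \ ·) (S \ ·) ?_ ?_ ?_ ?_ ?_
  · simp
  · simp
  · simp +contextual
  · simp +contextual
  · intro A hA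
    rw [neg_neg, mul_comm, Finset.sdiff_sdiff_eq_self (mem_powerset.1 hA)]

theorem splitOrderings_of_pos {y : α → ℝ} {S : Finset α} (hS : 0 < ∑ i ∈ S, y i) :
    splitOrderings y S = ∑ a ∈ S, splitOrderings y (S.erase a) := by
  unfold splitOrderings
  have hswap : ∑ a ∈ S, ∑ A ∈ (S.erase a).powerset, positiveOrderings (-y) #A A *
        positiveOrderings y #(S.erase a \ A) (S.erase a \ A) =
      ∑ A ∈ S.powerset, ∑ a ∈ S \ A, positiveOrderings (-y) #A A *
        positiveOrderings y #((S \ A).erase a) ((S \ A).erase a) := by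
    rw [sum_comm' (t' := S.powerset) (s' := fun A => S \ A)]
    · refine sum_congr rfl fun A _ => sum_congr rfl fun a _ => ?_
      rw [erase_sdiff_comm]
    · intro a A
      simp only [mem_powerset, mem_sdiff, subset_erase]
      tauto
  rw [hswap]
  refine sum_congr rfl fun A hA => ?_
  rw [← mul_sum]
  by_cases hneg : ∑ i ∈ A, y i ≤ 0
  · have hpos : 0 < ∑ i ∈ S \ A, y i := by
      have := sum_sdiff (f := y) (mem_powerset.1 hA)
      linarith
    have hne : (S \ A).Nonempty := by
      rw [nonempty_iff_ne_empty]
      rintro h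
      simp [h] at hpos
    rw [positiveOrderings_card y hne, if_pos hpos]
  · have hne : A.Nonempty := by
      rw [nonempty_iff_ne_empty]
      rintro rfl
      simp at hneg
    rw [positiveOrderings_card (-y) hne, if_neg, zero_mul, zero_mul]
    simp only [Pi.neg_apply, sum_neg_distrib]
    linarith

theorem splitOrderings_eq_factorial {y : α → ℝ}
    (hy : ∀ S : Finset α, S.Nonempty → ∑ i ∈ S, y i ≠ 0) (S : Finset α) :
    splitOrderings y S = (#S).factorial := by
  induction S using Finset.strongInduction with
  | H S ih =>
    obtain rfl | hS := S.eq_empty_or_nonempty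
    · simp [splitOrderings, positiveOrderings_zero_empty]
    have hrec : splitOrderings y S = ∑ a ∈ S, splitOrderings y (S.erase a) := by
      obtain hlt | hgt := (hy S hS).lt_or_gt
      · rw [← splitOrderings_neg, splitOrderings_of_pos (by simpa using hlt)]
        simp only [splitOrderings_neg]
      · exact splitOrderings_of_pos hgt
    rw [hrec, sum_congr rfl fun a ha => (ih _ (erase_ssubset ha)).trans
      (congrArg Nat.factorial (card_erase_of_mem ha)), sum_const, smul_eq_mul]
    exact Nat.mul_factorial_pred hS.card_pos.ne'

theorem sum_positiveSignedOrderings_mul {x : α → ℝ}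
    (hx : ∀ U S : Finset α, S.Nonempty → ∑ i ∈ S, flipOn x U i ≠ 0) (S : Finset α) :
    ∑ A ∈ S.powerset, positiveSignedOrderings x A * positiveSignedOrderings x (S \ A) =
      2 ^ #S * (#S).factorial := by
  have htotal : ∑ U ∈ S.powerset, splitOrderings (flipOn x U) S = 2 ^ #S * (#S).factorial := by
    simp [fun U => splitOrderings_eq_factorial (hx U) S]
  rw [← htotal]
  unfold splitOrderings positiveSignedOrderings
  rw [sum_comm]
  refine sum_congr rfl fun A hA => ?_
  have hAS := mem_powerset.1 hA
  rw [sum_mul_sum, ← sum_product']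
  refine sum_nbij' (fun p => (A \ p.1) ∪ p.2) (fun U => (A \ U, U \ A)) ?_ ?_ ?_ ?_ ?_
  · rintro ⟨V, W⟩ h
    simp only [mem_product, mem_powerset] at h ⊢
    grind
  · intro U h
    simp only [mem_product, mem_powerset] at h ⊢
    grind
  · rintro ⟨V, W⟩ h
    simp only [mem_product, mem_powerset, Prod.mk.injEq] at h ⊢
    constructor <;> grind
  · intro U h
    simp only [mem_powerset] at h ⊢
    grind
  · rintro ⟨V, W⟩ h
    simp only [mem_product, mem_powerset] at h
    congr 1
    · refine positiveOrderings_congr (fun i hi => ?_) _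
      simp only [flipOn, Pi.neg_apply]
      grind
    · refine positiveOrderings_congr (fun i hi => ?_) _
      simp only [flipOn]
      grind

theorem positiveSignedOrderings_mul_two_pow {x : α → ℝ}
    (hx : ∀ U S : Finset α, S.Nonempty → ∑ i ∈ S, flipOn x U i ≠ 0) (S : Finset α) :
    positiveSignedOrderings x S * 2 ^ #S = (#S).factorial * (#S).centralBinom := by
  induction S using Finset.strongInduction with
  | H S ih =>
    obtain rfl | hS := S.eq_empty_or_nonempty
    · simp [positiveSignedOrderings, positiveOrderings_zero_empty]
    set N : Finset α → ℕ := fun A => positiveSignedOrderings x A * 2 ^ #A with hN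
    set R : Finset α → ℕ := fun A => (#A).factorial * (#A).centralBinom with hR
    have hsum : ∑ A ∈ S.powerset, N A * N (S \ A) = ∑ A ∈ S.powerset, R A * R (S \ A) := by
      rw [sum_powerset_factorial_mul_centralBinom S]
      have h : ∀ A ∈ S.powerset, N A * N (S \ A) =
          2 ^ #S * (positiveSignedOrderings x A * positiveSignedOrderings x (S \ A)) :=
        fun A hA => by
          rw [← card_sdiff_add_card_eq_card (mem_powerset.1 hA), pow_add]
          simp only [hN]
          ring
      rw [sum_congr rfl h, ← mul_sum, sum_positiveSignedOrderings_mul hx, ← mul_assoc, ← mul_pow]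
      norm_num
    have hempty : N ∅ = R ∅ := ih ∅ (empty_ssubset.2 hS)
    have hR0 : R ∅ = 1 := by simp [hR]
    have hSmem : S ∈ S.powerset.erase ∅ :=
      mem_erase.2 ⟨hS.ne_empty, mem_powerset_self S⟩
    have hrest : ∑ A ∈ (S.powerset.erase ∅).erase S, N A * N (S \ A) =
        ∑ A ∈ (S.powerset.erase ∅).erase S, R A * R (S \ A) := by
      refine sum_congr rfl fun A hA => ?_
      simp only [mem_erase, mem_powerset] at hA
      congr 1
      · exact ih A (hA.2.2.ssubset_of_ne hA.1)
      · exact ih (S \ A) (sdiff_ssubset hA.2.2 (nonempty_iff_ne_empty.2 hA.2.1))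
    rw [← add_sum_erase _ _ (empty_mem_powerset S), ← add_sum_erase _ _ (empty_mem_powerset S),
      ← add_sum_erase _ _ hSmem, ← add_sum_erase _ _ hSmem, hrest, Finset.sdiff_self, sdiff_empty,
      hempty, hR0] at hsum
    change N S = R S
    omega

end

theorem positiveOrderings_univ {m : ℕ} (y : Fin m → ℝ) :
    positiveOrderings y m univ =
      #{σ : Equiv.Perm (Fin m) | ∀ t, 0 < ∑ i with i ≤ t, y (σ i)} := by
  symm
  refine card_bij (fun σ _ => σ) ?_ ?_ ?_
  · intro σ hσ
    simp only [mem_filter, mem_univ, true_and] at hσ ⊢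
    exact ⟨image_univ_equiv σ, hσ⟩
  · intro σ _ τ _ h
    exact DFunLike.coe_injective h
  · intro f hf
    simp only [mem_filter, mem_univ, true_and] at hf
    have hsurj : Function.Surjective f := fun b => by
      simpa using Finset.ext_iff.1 hf.1 b
    exact ⟨Equiv.ofBijective f (Finite.surjective_iff_bijective.1 hsurj), by simpa using hf.2, rfl⟩

theorem card_signs_eq_card_flipOn {m : ℕ} (x : Fin m → ℝ) (σ : Equiv.Perm (Fin m)) :
    #{ε ∈ Fintype.piFinset fun _ : Fin m => ({-1, 1} : Finset ℝ) |
        ∀ t, 0 < ∑ i with i ≤ t, ε i * x (σ i)} =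
      #{U : Finset (Fin m) | ∀ t, 0 < ∑ i with i ≤ t, flipOn x U (σ i)} := by
  symm
  have hsign : ∀ (U : Finset (Fin m)) (i : Fin m),
      (if σ i ∈ U then (-1 : ℝ) else 1) * x (σ i) = flipOn x U (σ i) := by
    intro U i
    unfold flipOn
    split_ifs <;> simp
  refine card_bij (fun U _ i => if σ i ∈ U then -1 else 1) ?_ ?_ ?_
  · intro U hU
    simp only [mem_filter, mem_univ, true_and] at hU
    simp only [mem_filter, Fintype.mem_piFinset, hsign]
    refine ⟨fun i => ?_, hU⟩
    split_ifs <;> simp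
  · intro U _ V _ h
    ext j
    have hj := congrFun h (σ.symm j)
    simp only [Equiv.apply_symm_apply] at hj
    split_ifs at hj with h₁ h₂ h₂
    · simp [h₁, h₂]
    · norm_num at hj
    · norm_num at hj
    · simp [h₁, h₂]
  · intro ε hε
    simp only [mem_filter, Fintype.mem_piFinset, mem_insert, mem_singleton] at hε
    have heq : (fun i => if σ i ∈ univ.filter (fun j => ε (σ.symm j) = -1) then (-1 : ℝ) else 1)
        = ε := by
      funext i
      obtain h | h := hε.1 i
      · simp [h]
      · norm_num [h]
    refine ⟨univ.filter fun j => ε (σ.symm j) = -1, ?_, heq⟩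
    simp only [mem_filter, mem_univ, true_and]
    intro t
    simp only [← hsign]
    rw [sum_congr rfl fun i _ => congrArg (· * x (σ i)) (congrFun heq i)]
    exact hε.2 t

theorem card_positive_walks {m : ℕ} (x : Fin m → ℝ) :
    #{p ∈ (univ : Finset (Equiv.Perm (Fin m))) ×ˢ
        Fintype.piFinset fun _ : Fin m => ({-1, 1} : Finset ℝ) |
        ∀ t, 0 < ∑ i with i ≤ t, p.2 i * x (p.1 i)} = positiveSignedOrderings x univ := by
  rw [card_filter, sum_product]
  simp only [← card_filter, card_signs_eq_card_flipOn]
  simp only [card_filter]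
  rw [sum_comm]
  simp only [← card_filter]
  simp [positiveSignedOrderings, positiveOrderings_univ]

/-- Sparre Andersen's fluctuation theorem: if `x ∈ ℝ^m` has the distinct subset-sum
property, then the random walk `W_x(t) = Σ_{i=1}^t ε_i x_{σ(i)}`, with `σ` a uniformly
random permutation of `[m]` and `ε` uniform in `{±1}^m`, satisfies
`P[∀ t ∈ [m], W_x(t) > 0] = C(2m, m)/4^m`. -/
theorem stmt_13 (m : ℕ) (x : Fin m → ℝ)
    (hDSS : ∀ A B : Finset (Fin m), Disjoint A B → A ≠ B →
      ∑ i ∈ A, x i ≠ ∑ i ∈ B, x i) :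
    (((Finset.univ ×ˢ Fintype.piFinset fun _ : Fin m => ({-1, 1} : Finset ℝ)).filter
        (fun p : Equiv.Perm (Fin m) × (Fin m → ℝ) =>
          ∀ t : Fin m,
            0 < ∑ i ∈ Finset.univ.filter (fun i => i ≤ t), p.2 i * x (p.1 i))).card : ℝ)
        / (m.factorial * 2 ^ m)
      = ((2 * m).choose m : ℝ) / 4 ^ m := by
  have h := positiveSignedOrderings_mul_two_pow (sum_flipOn_ne_zero hDSS) univ
  rw [← card_positive_walks, card_univ, Fintype.card_fin, Nat.centralBinom] at h
  have h' := congrArg (Nat.cast : ℕ → ℝ) h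
  push_cast at h'
  have h4 : (4 : ℝ) ^ m = 2 ^ m * 2 ^ m := by rw [← mul_pow]; norm_num
  rw [div_eq_div_iff (by positivity) (by positivity), h4, ← mul_assoc, h']
  ring
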